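/- arXiv:1006.2488 — 2 statements merged into one kernel-verified Lean document; each statement's English description precedes it below -/
import Mathlib

section
/- Let $f : I \subset [0,\infty) \to \mathbb{R}$ be twice differentiable on the interior $I^\circ$ of $I$ with $f''$ integrable on $[a,b]$, where $a, b \in I^\circ$ and $a < b$. Let $p, q > 1$ with $\frac{1}{p} + \frac{1}{q} = 1$, suppose $|f''|^q$ is $s$-convex in the second sense on $[a,b]$ for some fixed $s \in (0,1]$, and suppose $M > 0$ satisfies $|f''(u)| \le M$ for all $u \in [a,b]$. Then for every $x \in [a,b]$: $\left| \frac{1}{b-a}\int_a^b f(u)\,du - f(x) + \left(x - \frac{a+b}{2}\right) f'(x) \right| \le \frac{3M}{(2p+1)^{1/p}} \left(\frac{2}{s+1}\right)^{1/q} \Big[ \frac{(b-a)^2}{24} + \frac{1}{2}\left(x - \frac{a+b}{2}\right)^2 \Big]$. -/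
open MeasureTheory Set intervalIntegral

theorem aux_nonneg (g g' : ℝ → ℝ) (a b x : ℝ) (hx : x ∈ Icc a b) (h0 : g x = 0)
    (hg : ∀ y ∈ Icc a b, HasDerivAt g (g' y) y)
    (hs : ∀ y ∈ Icc a b, 0 ≤ (y - x) * g' y) : ∀ u ∈ Icc a b, 0 ≤ g u := by
  intro u hu
  rcases lt_trichotomy x u with h | h | h
  · obtain ⟨c, hc, he⟩ := exists_hasDerivAt_eq_slope g g' h
      (fun y hy => (hg y ⟨hx.1.trans hy.1, hy.2.trans hu.2⟩).continuousAt.continuousWithinAt)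
      (fun y hy => hg y ⟨hx.1.trans hy.1.le, hy.2.le.trans hu.2⟩)
    have h1 := hs c ⟨hx.1.trans hc.1.le, hc.2.le.trans hu.2⟩
    have h2 : 0 ≤ g' c := nonneg_of_mul_nonneg_right h1 (sub_pos.2 hc.1)
    rw [eq_div_iff (sub_pos.2 h).ne', h0] at he
    have := mul_nonneg h2 (sub_pos.2 h).le
    linarith
  · rw [← h, h0]
  · obtain ⟨c, hc, he⟩ := exists_hasDerivAt_eq_slope g g' h
      (fun y hy => (hg y ⟨hu.1.trans hy.1, hy.2.trans hx.2⟩).continuousAt.continuousWithinAt)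
      (fun y hy => hg y ⟨hu.1.trans hy.1.le, hy.2.le.trans hx.2⟩)
    have h1 := hs c ⟨hu.1.trans hc.1.le, hc.2.le.trans hx.2⟩
    have h3 := hc.2
    have h2 : g' c ≤ 0 := by
      by_contra hh
      push Not at hh
      have := mul_pos (sub_pos.2 h3) hh
      linarith
    rw [eq_div_iff (sub_pos.2 h).ne', h0] at he
    have := mul_nonneg (neg_nonneg.2 h2) (sub_pos.2 h).le
    linarith

theorem aux_taylor (f f' f'' : ℝ → ℝ) (a b M : ℝ)
    (hf' : ∀ y ∈ Icc a b, HasDerivAt f (f' y) y)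
    (hf'' : ∀ y ∈ Icc a b, HasDerivAt f' (f'' y) y)
    (hbd : ∀ u ∈ Icc a b, |f'' u| ≤ M) (x : ℝ) (hx : x ∈ Icc a b) :
    ∀ u ∈ Icc a b, |f u - f x - f' x * (u - x)| ≤ M / 2 * (u - x) ^ 2 := by
  have hL : ∀ y ∈ Icc a b, |f' y - f' x| ≤ M * |y - x| := fun y hy =>
    (convex_Icc a b).norm_image_sub_le_of_norm_hasDerivWithin_le
      (fun z hz => (hf'' z hz).hasDerivWithinAt) hbd hx hy
  have hP : ∀ y ∈ Icc a b, |(y - x) * (f' y - f' x)| ≤ M * (y - x) ^ 2 := by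
    intro y hy
    rw [abs_mul, ← sq_abs (y - x)]
    nlinarith [hL y hy, abs_nonneg (y - x)]
  have hd : ∀ y ∈ Icc a b,
      HasDerivAt (fun u => f u - f x - f' x * (u - x)) (f' y - f' x) y := by
    intro y hy
    have := ((hf' y hy).sub_const (f x)).sub (((hasDerivAt_id y).sub_const x).const_mul (f' x))
    rw [mul_one] at this
    exact this
  have hq : ∀ y : ℝ, HasDerivAt (fun u => M / 2 * (u - x) ^ 2) (M * (y - x)) y := by
    intro y
    have := (((hasDerivAt_id y).sub_const x).pow 2).const_mul (M / 2)
    have e : M / 2 * (((2 : ℕ) : ℝ) * (id y - x) ^ (2 - 1) * 1) = M * (y - x) := by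
      norm_num
      ring
    rw [e] at this
    exact this
  intro u hu
  rw [abs_le]
  constructor
  · have := aux_nonneg (fun u => M / 2 * (u - x) ^ 2 + (f u - f x - f' x * (u - x)))
      (fun y => M * (y - x) + (f' y - f' x)) a b x hx (by simp)
      (fun y hy => (hq y).add (hd y hy))
      (fun y hy => by nlinarith [(abs_le.1 (hP y hy)).1]) u hu
    linarith
  · have := aux_nonneg (fun u => M / 2 * (u - x) ^ 2 - (f u - f x - f' x * (u - x)))
      (fun y => M * (y - x) - (f' y - f' x)) a b x hx (by simp)
      (fun y hy => (hq y).sub (hd y hy))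
      (fun y hy => by nlinarith [(abs_le.1 (hP y hy)).2]) u hu
    linarith

theorem aux_const (p q s : ℝ) (hp : 1 < p) (hq : 1 < q) (hs : s ∈ Ioc (0:ℝ) 1) :
    1 ≤ 3 / (2 * p + 1) ^ (1 / p) * (2 / (s + 1)) ^ (1 / q) := by
  have h1 : (1:ℝ) ≤ (2 / (s + 1)) ^ (1 / q) := by
    apply Real.one_le_rpow
    · rw [le_div_iff₀ (by linarith [hs.1])]
      linarith [hs.2]
    · positivity
  have h2 : (2 * p + 1) ^ (1 / p) ≤ 3 := by
    have hb : 1 + p * 2 ≤ (1 + 2 : ℝ) ^ p :=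
      one_add_mul_self_le_rpow_one_add (by norm_num) hp.le
    calc (2 * p + 1) ^ (1 / p) ≤ ((3:ℝ) ^ p) ^ (1 / p) := by
          apply Real.rpow_le_rpow (by linarith) _ (by positivity)
          norm_num at hb
          linarith
      _ = 3 := by
          rw [← Real.rpow_mul (by norm_num), mul_one_div_cancel (by linarith), Real.rpow_one]
  have h3 : (0:ℝ) < (2 * p + 1) ^ (1 / p) := Real.rpow_pos_of_pos (by linarith) _
  have h4 : 1 ≤ 3 / (2 * p + 1) ^ (1 / p) := by
    rwa [le_div_iff₀ h3, one_mul]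
  exact one_le_mul_of_one_le_of_one_le h4 h1

theorem stmt5 (I : Set ℝ) (hI : Convex ℝ I) (hI0 : I ⊆ Set.Ici (0:ℝ)) (f f' f'' : ℝ → ℝ) (a b : ℝ)
    (ha : a ∈ interior I) (hb : b ∈ interior I) (hab : a < b)
    (hf' : ∀ y ∈ interior I, HasDerivAt f (f' y) y)
    (hf'' : ∀ y ∈ interior I, HasDerivAt f' (f'' y) y)
    (hfint : IntervalIntegrable f'' MeasureTheory.volume a b)
    (p q : ℝ) (hp : 1 < p) (hq : 1 < q) (hpq : 1 / p + 1 / q = 1)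
    (s : ℝ) (hs : s ∈ Set.Ioc (0:ℝ) 1)
    (hconv : ∀ u ∈ Set.Icc a b, ∀ v ∈ Set.Icc a b, ∀ t ∈ Set.Icc (0:ℝ) 1,
      |f'' (t * u + (1 - t) * v)| ^ q ≤ t ^ s * |f'' u| ^ q + (1 - t) ^ s * |f'' v| ^ q)
    (M : ℝ) (hM : 0 < M) (hbd : ∀ u ∈ Set.Icc a b, |f'' u| ≤ M) :
    ∀ x ∈ Set.Icc a b,
      |(1 / (b - a)) * (∫ u in a..b, f u) - f x + (x - (a + b) / 2) * f' x|
        ≤ 3 * M / (2 * p + 1) ^ (1 / p) * (2 / (s + 1)) ^ (1 / q) *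
            ((b - a) ^ 2 / 24 + (1 / 2) * (x - (a + b) / 2) ^ 2) := by
  intro x hx
  have hsub : Icc a b ⊆ interior I := hI.interior.ordConnected.out ha hb
  have hT := aux_taylor f f' f'' a b M (fun y hy => hf' y (hsub hy))
    (fun y hy => hf'' y (hsub hy)) hbd x hx
  have hfi : IntervalIntegrable f volume a b := by
    apply ContinuousOn.intervalIntegrable
    rw [uIcc_of_le hab.le]
    exact fun y hy => (hf' y (hsub hy)).continuousAt.continuousWithinAt
  have hba : 0 < b - a := sub_pos.2 hab
  have hsq : ∫ u in a..b, M / 2 * (u - x) ^ 2 = M / 2 * (((b - x) ^ 3 - (a - x) ^ 3) / 3) := by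
    rw [intervalIntegral.integral_const_mul,
      intervalIntegral.integral_comp_sub_right (fun u => u ^ 2) x, integral_pow]
    norm_num
  have hlin : ∫ u in a..b, (f u - f x - f' x * (u - x))
      = (∫ u in a..b, f u) - (b - a) * f x - f' x * (((b - x) ^ 2 - (a - x) ^ 2) / 2) := by
    rw [intervalIntegral.integral_sub (hfi.sub intervalIntegrable_const)
      (Continuous.intervalIntegrable (by fun_prop) _ _),
      intervalIntegral.integral_sub hfi intervalIntegrable_const,
      intervalIntegral.integral_const, intervalIntegral.integral_const_mul,
      intervalIntegral.integral_comp_sub_right (fun u => u) x, integral_id, smul_eq_mul]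
  have hB : |∫ u in a..b, (f u - f x - f' x * (u - x))| ≤ ∫ u in a..b, M / 2 * (u - x) ^ 2 := by
    rw [← Real.norm_eq_abs]
    apply intervalIntegral.norm_integral_le_of_norm_le hab.le
    · exact Filter.Eventually.of_forall fun u hu => hT u ⟨hu.1.le, hu.2⟩
    · exact Continuous.intervalIntegrable (by fun_prop) _ _
  rw [hsq] at hB
  have hE : (1 / (b - a)) * (∫ u in a..b, f u) - f x + (x - (a + b) / 2) * f' x
      = (∫ u in a..b, (f u - f x - f' x * (u - x))) / (b - a) := by
    rw [hlin]
    field_simp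
    ring
  have hK : (M / 2 * (((b - x) ^ 3 - (a - x) ^ 3) / 3)) / (b - a)
      = M * ((b - a) ^ 2 / 24 + (1 / 2) * (x - (a + b) / 2) ^ 2) := by
    field_simp
    ring
  have hC := aux_const p q s hp hq hs
  have hN : 0 ≤ M * ((b - a) ^ 2 / 24 + (1 / 2) * (x - (a + b) / 2) ^ 2) := by positivity
  rw [hE, abs_div, abs_of_pos hba]
  calc _ ≤ (M / 2 * (((b - x) ^ 3 - (a - x) ^ 3) / 3)) / (b - a) := by gcongr
    _ = 1 * (M * ((b - a) ^ 2 / 24 + (1 / 2) * (x - (a + b) / 2) ^ 2)) := by rw [hK, one_mul]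
    _ ≤ _ := mul_le_mul_of_nonneg_right hC hN
    _ = _ := by ring
end

section
/- Let $f : I \subset [0,\infty) \to \mathbb{R}$ be twice differentiable on the interior $I^\circ$ of $I$ with $f''$ integrable on $[a,b]$, where $a, b \in I^\circ$ and $a < b$. Let $p, q > 1$ with $\frac{1}{p} + \frac{1}{q} = 1$, and suppose $|f''|^q$ is $s$-concave in the second sense on $[a,b]$ for some fixed $s \in (0,1]$. Then for every $x \in [a,b]$: $\left| \frac{1}{b-a}\int_a^b f(u)\,du - f(x) + \left(x - \frac{a+b}{2}\right) f'(x) \right| \le \frac{2^{(s-1)/q}}{(2p+1)^{1/p}(b-a)} \cdot \frac{(x-a)^3 \left| f''\!\left(\frac{x+a}{2}\right)\right| + (b-x)^3 \left| f''\!\left(\frac{b+x}{2}\right)\right|}{2}$. -/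
open MeasureTheory Set intervalIntegral

lemma aux_ibp (f f' f'' : ℝ → ℝ) (c d k : ℝ)
    (hf' : ∀ y ∈ uIcc c d, HasDerivAt f (f' y) y)
    (hf'' : ∀ y ∈ uIcc c d, HasDerivAt f' (f'' y) y)
    (hfint : IntervalIntegrable f'' volume c d) :
    ∫ u in c..d, (u - k) ^ 2 * f'' u =
      2 * (∫ u in c..d, f u) + ((d - k) ^ 2 * f' d - 2 * (d - k) * f d)
        - ((c - k) ^ 2 * f' c - 2 * (c - k) * f c) := by
  have hfi : IntervalIntegrable f volume c d :=
    ContinuousOn.intervalIntegrable (fun y hy => (hf' y hy).continuousAt.continuousWithinAt)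
  have hwi : IntervalIntegrable (fun u => (u - k) ^ 2 * f'' u) volume c d :=
    hfint.continuousOn_mul (by fun_prop)
  have h2 : IntervalIntegrable (fun u => 2 * f u) volume c d := hfi.const_mul 2
  have key := integral_eq_sub_of_hasDerivAt (a := c) (b := d)
    (f := fun u => (u - k) ^ 2 * f' u - 2 * (u - k) * f u)
    (f' := fun u => (u - k) ^ 2 * f'' u - 2 * f u) (by
      intro y hy
      have h0 : HasDerivAt (fun u : ℝ => u - k) 1 y := (hasDerivAt_id y).sub_const k
      have h1 := ((h0.pow 2).mul (hf'' y hy)).sub ((h0.const_mul 2).mul (hf' y hy))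
      refine h1.congr_deriv ?_
      simp
      ring) (hwi.sub h2)
  rw [integral_sub hwi h2, intervalIntegral.integral_const_mul] at key
  linarith

lemma aux_holder (h w : ℝ → ℝ) (c d : ℝ) (hcd : c ≤ d)
    (hint : IntervalIntegrable h volume c d) (hw : Continuous w)
    (p q : ℝ) (hp : 1 < p) (hq : 1 < q) (hpq : 1 / p + 1 / q = 1) (s : ℝ)
    (hwp : ∫ u in c..d, |w u| ^ p = (d - c) ^ (2 * p + 1) / (2 * p + 1))
    (hconv : ∀ u ∈ Icc c d,
      |h u| ^ q + |h (c + d - u)| ^ q ≤ 2 ^ s * |h ((d + c) / 2)| ^ q) :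
    |∫ u in c..d, w u * h u| ≤
      2 ^ ((s - 1) / q) / (2 * p + 1) ^ (1 / p) * ((d - c) ^ 3 * |h ((d + c) / 2)|) := by
  have hq0 : 0 < q := by linarith
  have hp0 : 0 < p := by linarith
  rcases hcd.eq_or_lt with rfl | hlt
  · simp
  have hL : 0 < d - c := by linarith
  set m := |h ((d + c) / 2)| with hm
  have hm0 : 0 ≤ m := abs_nonneg _
  set μ := volume.restrict (Ioc c d) with hμ
  have hhm : AEStronglyMeasurable h μ := hint.1.aestronglyMeasurable
  have hb : ∀ u ∈ Icc c d, |h u| ≤ (2 ^ s * m ^ q) ^ (1 / q) := by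
    intro u hu
    have h1 := hconv u hu
    have h2 : 0 ≤ |h (c + d - u)| ^ q := by positivity
    have h3 : |h u| ^ q ≤ 2 ^ s * m ^ q := by linarith
    calc |h u| = (|h u| ^ q) ^ (1 / q) := by
          rw [← Real.rpow_mul (abs_nonneg _), mul_one_div_cancel hq0.ne', Real.rpow_one]
      _ ≤ _ := Real.rpow_le_rpow (by positivity) h3 (by positivity)
  have hmh : MemLp h (ENNReal.ofReal q) μ := by
    refine MemLp.of_bound hhm ((2 ^ s * m ^ q) ^ (1 / q)) ?_
    refine (ae_restrict_iff' measurableSet_Ioc).2 (Filter.Eventually.of_forall ?_)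
    intro u hu
    exact hb u (Ioc_subset_Icc_self hu)
  have hmw : MemLp w (ENNReal.ofReal p) μ := by
    obtain ⟨C, hC⟩ := isCompact_Icc.exists_bound_of_continuousOn (hw.continuousOn (s := Icc c d))
    refine MemLp.of_bound hw.aestronglyMeasurable C ?_
    refine (ae_restrict_iff' measurableSet_Ioc).2 (Filter.Eventually.of_forall ?_)
    intro u hu
    exact hC u (Ioc_subset_Icc_self hu)
  have hgi : IntervalIntegrable (fun u => |h u| ^ q) volume c d := by
    rw [intervalIntegrable_iff_integrableOn_Ioc_of_le hcd]
    have := hmh.integrable_norm_rpow (by simpa using hq0) (by simp)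
    rw [ENNReal.toReal_ofReal hq0.le] at this
    exact this
  have hgi' : IntervalIntegrable (fun u => |h (c + d - u)| ^ q) volume c d := by
    have := (hgi.comp_sub_left (c + d)).symm
    simpa using this
  have hgint : ∫ u in c..d, |h u| ^ q ≤ 2 ^ (s - 1) * m ^ q * (d - c) := by
    have h1 : ∫ u in c..d, |h (c + d - u)| ^ q = ∫ u in c..d, |h u| ^ q := by
      rw [intervalIntegral.integral_comp_sub_left (fun u => |h u| ^ q) (c + d)]
      simp
    have h2 : ∫ u in c..d, (|h u| ^ q + |h (c + d - u)| ^ q) ≤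
        ∫ u in c..d, 2 ^ s * m ^ q :=
      intervalIntegral.integral_mono_on hcd (hgi.add hgi') (by simp) hconv
    rw [integral_add hgi hgi', h1, intervalIntegral.integral_const, smul_eq_mul] at h2
    rw [Real.rpow_sub_one (by norm_num)]
    linarith
  have hol := integral_mul_norm_le_Lp_mul_Lq
    (Real.holderConjugate_iff.2 ⟨hp, by simpa using hpq⟩) hmw hmh
  have e1 : ∫ u, ‖w u‖ ^ p ∂μ = (d - c) ^ (2 * p + 1) / (2 * p + 1) := by
    rw [← hwp, intervalIntegral.integral_of_le hcd]; rfl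
  have e2 : ∫ u, ‖h u‖ ^ q ∂μ ≤ 2 ^ (s - 1) * m ^ q * (d - c) := by
    refine le_trans (le_of_eq ?_) hgint
    rw [intervalIntegral.integral_of_le hcd]; rfl
  have e0 : 0 ≤ ∫ u, ‖h u‖ ^ q ∂μ := integral_nonneg fun u => by positivity
  calc |∫ u in c..d, w u * h u| ≤ ∫ u, ‖w u‖ * ‖h u‖ ∂μ := by
        rw [intervalIntegral.integral_of_le hcd]
        refine (MeasureTheory.norm_integral_le_integral_norm (μ := μ) (fun u => w u * h u)).trans (le_of_eq ?_)
        simp only [norm_mul]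
    _ ≤ _ := hol
    _ ≤ ((d - c) ^ (2 * p + 1) / (2 * p + 1)) ^ (1 / p) *
          (2 ^ (s - 1) * m ^ q * (d - c)) ^ (1 / q) := by
        rw [e1]
        gcongr
    _ = _ := by
        rw [Real.div_rpow (by positivity) (by positivity),
          Real.mul_rpow (by positivity) (by positivity),
          Real.mul_rpow (by positivity) (by positivity),
          ← Real.rpow_mul (by positivity), ← Real.rpow_mul (by positivity),
          ← Real.rpow_mul hm0, mul_one_div_cancel hq0.ne', Real.rpow_one, mul_one_div]
        have : (d - c) ^ 3 = (d - c) ^ ((2 * p + 1) * (1 / p)) * (d - c) ^ (1 / q) := by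
          rw [← Real.rpow_add hL, ← Real.rpow_natCast]
          congr 1
          have : (2 * p + 1) * (1 / p) = 2 + 1 / p := by field_simp
          rw [this, add_assoc, hpq]; norm_num
        rw [this]
        ring

lemma aux_pow (L p : ℝ) (hp : 1 < p) :
    ∫ u in (0:ℝ)..L, |u ^ 2| ^ p = ∫ u in (0:ℝ)..L, |u| ^ (2 * p) := by
  congr 1
  ext u
  rw [abs_pow, ← Real.rpow_natCast, ← Real.rpow_mul (abs_nonneg _)]
  norm_num

lemma aux_pow' (L p : ℝ) (hL : 0 ≤ L) (hp : 1 < p) :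
    ∫ u in (0:ℝ)..L, |u ^ 2| ^ p = L ^ (2 * p + 1) / (2 * p + 1) := by
  rw [aux_pow L p hp]
  have : ∫ u in (0:ℝ)..L, |u| ^ (2 * p) = ∫ u in (0:ℝ)..L, u ^ (2 * p) := by
    apply intervalIntegral.integral_congr
    intro u hu
    rw [uIcc_of_le hL] at hu
    simp only [abs_of_nonneg hu.1]
  rw [this, integral_rpow (Or.inl (by linarith)), Real.zero_rpow (by linarith), sub_zero]

theorem stmt12 (I : Set ℝ) (hI : Convex ℝ I) (hI0 : I ⊆ Set.Ici (0:ℝ)) (f f' f'' : ℝ → ℝ) (a b : ℝ)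
    (ha : a ∈ interior I) (hb : b ∈ interior I) (hab : a < b)
    (hf' : ∀ y ∈ interior I, HasDerivAt f (f' y) y)
    (hf'' : ∀ y ∈ interior I, HasDerivAt f' (f'' y) y)
    (hfint : IntervalIntegrable f'' MeasureTheory.volume a b)
    (p q : ℝ) (hp : 1 < p) (hq : 1 < q) (hpq : 1 / p + 1 / q = 1)
    (s : ℝ) (hs : s ∈ Set.Ioc (0:ℝ) 1)
    (hconv : ∀ u ∈ Set.Icc a b, ∀ v ∈ Set.Icc a b, ∀ t ∈ Set.Icc (0:ℝ) 1,
      |f'' (t * u + (1 - t) * v)| ^ q ≥ t ^ s * |f'' u| ^ q + (1 - t) ^ s * |f'' v| ^ q) :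
    ∀ x ∈ Set.Icc a b,
      |(1 / (b - a)) * (∫ u in a..b, f u) - f x + (x - (a + b) / 2) * f' x|
        ≤ (2:ℝ) ^ ((s - 1) / q) / ((2 * p + 1) ^ (1 / p) * (b - a)) *
            (((x - a) ^ 3 * |f'' ((x + a) / 2)| + (b - x) ^ 3 * |f'' ((b + x) / 2)|) / 2) := by
  intro x hx
  have hsub : Icc a b ⊆ interior I := hI.interior.ordConnected.out ha hb
  have hL : 0 < b - a := by linarith
  have hc : ∀ c ∈ Icc a b, ∀ d ∈ Icc a b, ∀ u ∈ Icc c d,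
      |f'' u| ^ q + |f'' (c + d - u)| ^ q ≤ 2 ^ s * |f'' ((d + c) / 2)| ^ q := by
    intro c hc d hd u hu
    have := hconv u ⟨by linarith [hc.1, hu.1], by linarith [hd.2, hu.2]⟩ (c + d - u)
      ⟨by linarith [hc.1, hu.2], by linarith [hd.2, hu.1]⟩ (1 / 2) ⟨by norm_num, by norm_num⟩
    have e : 1 / 2 * u + (1 - 1 / 2) * (c + d - u) = (d + c) / 2 := by ring
    have e2 : (1 - 1 / 2 : ℝ) = 1 / 2 := by norm_num
    rw [e, e2, Real.div_rpow (by norm_num) (by norm_num), Real.one_rpow, ← mul_add] at this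
    have h2 : (0:ℝ) < 2 ^ s := by positivity
    calc _ = 2 ^ s * (1 / 2 ^ s * (|f'' u| ^ q + |f'' (c + d - u)| ^ q)) := by field_simp
      _ ≤ _ := by gcongr
  have haI : a ∈ Icc a b := ⟨le_rfl, hab.le⟩
  have hbI : b ∈ Icc a b := ⟨hab.le, le_rfl⟩
  have s1 : uIcc a x ⊆ Icc a b := by rw [uIcc_of_le hx.1]; exact Icc_subset_Icc_right hx.2
  have s2 : uIcc x b ⊆ Icc a b := by rw [uIcc_of_le hx.2]; exact Icc_subset_Icc_left hx.1
  have i1 : IntervalIntegrable f'' volume a x := hfint.mono_set (by rwa [uIcc_of_le hab.le])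
  have i2 : IntervalIntegrable f'' volume x b := hfint.mono_set (by rwa [uIcc_of_le hab.le])
  have A1 := aux_holder f'' (fun u => (u - a) ^ 2) a x hx.1 i1 (by fun_prop) p q hp hq hpq s (by
    rw [intervalIntegral.integral_comp_sub_right (fun u => |u ^ 2| ^ p) a, sub_self]
    exact aux_pow' _ _ (by linarith [hx.1]) hp) (hc a haI x hx)
  have A2 := aux_holder f'' (fun u => (u - b) ^ 2) x b hx.2 i2 (by fun_prop) p q hp hq hpq s (by
    have : ∀ u : ℝ, (u - b) ^ 2 = (b - u) ^ 2 := fun u => by ring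
    simp only [this]
    rw [intervalIntegral.integral_comp_sub_left (fun u => |u ^ 2| ^ p) b, sub_self]
    exact aux_pow' _ _ (by linarith [hx.2]) hp) (hc x hx b hbI)
  have B1 := aux_ibp f f' f'' a x a (fun y hy => hf' y (hsub (s1 hy)))
    (fun y hy => hf'' y (hsub (s1 hy))) i1
  have B2 := aux_ibp f f' f'' x b b (fun y hy => hf' y (hsub (s2 hy)))
    (fun y hy => hf'' y (hsub (s2 hy))) i2
  have j1 : IntervalIntegrable f volume a x := ContinuousOn.intervalIntegrable
    (fun y hy => (hf' y (hsub (s1 hy))).continuousAt.continuousWithinAt)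
  have j2 : IntervalIntegrable f volume x b := ContinuousOn.intervalIntegrable
    (fun y hy => (hf' y (hsub (s2 hy))).continuousAt.continuousWithinAt)
  have C := integral_add_adjacent_intervals j1 j2
  have key : (1 / (b - a)) * (∫ u in a..b, f u) - f x + (x - (a + b) / 2) * f' x =
      1 / (2 * (b - a)) * ((∫ u in a..x, (u - a) ^ 2 * f'' u) +
        ∫ u in x..b, (u - b) ^ 2 * f'' u) := by
    rw [B1, B2, ← C]
    field_simp
    ring
  rw [key, abs_mul, abs_of_pos (by positivity)]
  calc _ ≤ 1 / (2 * (b - a)) * (_ + _) := by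
        gcongr
        exact (abs_add_le _ _).trans (add_le_add A1 A2)
    _ = _ := by
        have : (2 * p + 1) ^ (1 / p) ≠ 0 := by positivity
        field_simp
end
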